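/- arXiv:1202.0932 — 2 statements merged into one kernel-verified Lean document; each statement's English description precedes it below -/
import Mathlib

section
/- For all integers n and d with n ≥ d ≥ 1, the maximum size A∘(n,d) of a subset of S_n whose distinct elements are at pairwise translocation distance at least d satisfies A∘(n,d) ≥ (n−d+1)! / C(n,d−1), where C(n,d−1) is the binomial coefficient. -/
/-- `IsMove l l'` holds if `l'` is obtained from `l` by a single translocation:
removing the element at position `i` and reinserting it at position `j`. -/
def IsMove {α : Type*} (l l' : List α) : Prop :=
  ∃ i j : Fin l.length, l' = (l.eraseIdx i).insertIdx j (l.get i)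

/-- `ReachIn step m l l'` holds if `l'` can be obtained from `l` by `m` applications
of the relation `step`. -/
def ReachIn {α : Type*} (step : List α → List α → Prop) : ℕ → List α → List α → Prop
  | 0, l, l' => l = l'
  | m+1, l, l' => ∃ l'', step l l'' ∧ ReachIn step m l'' l'

/-- The one-line notation of a permutation of `Fin n`. -/
def oneLine {n : ℕ} (σ : Equiv.Perm (Fin n)) : List (Fin n) := List.ofFn σ

/-- The translocation distance: the minimum number of translocations transforming
the one-line notation of `σ` into that of `π`. -/
noncomputable def translocDist {n : ℕ} (σ π : Equiv.Perm (Fin n)) : ℕ :=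
  sInf {m | ReachIn IsMove m (oneLine σ) (oneLine π)}

/-- `maxTranslocCode n d` is the maximum size of a subset of the symmetric group on
`n` elements whose distinct elements are at pairwise translocation distance at least `d`. -/
noncomputable def maxTranslocCode (n d : ℕ) : ℕ :=
  sSup {M | ∃ C : Finset (Equiv.Perm (Fin n)), C.card = M ∧
    ∀ σ ∈ C, ∀ π ∈ C, σ ≠ π → d ≤ translocDist σ π}

/-!
A translocation removes one entry from the one-line notation and reinserts it, so two permutations
at distance less than `d` have a common subsequence of length `k = n - d + 1`. Relabelling the
symbols shows that all sequences of `k` distinct symbols occur as subsequences of equally many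
permutations; since a permutation contains exactly one rearrangement of a given sequence, this
number is `n! / k!`. Hence at most `C(n,k) * (n! / k!)` permutations share a subsequence of length
`k` with a given one. A maximal set of permutations without such shared subsequences covers all
`n!` permutations by these neighbourhoods, and therefore has at least `k! / C(n,k)` elements.
-/

section GilbertVarshamov

variable {α : Type*} [Finite α]

theorem exists_isSeparated_card_le_mul (R : SetRel α α) [R.IsRefl] [R.IsSymm] {b : ℕ}
    (hb : ∀ a, {x | (a, x) ∈ R}.ncard ≤ b) :
    ∃ C : Finset α, R.IsSeparated (C : Set α) ∧ Nat.card α ≤ C.card * b := by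
  obtain ⟨N, hN⟩ := (Set.toFinite {N : Set α | N ⊆ Set.univ ∧ R.IsSeparated N}).exists_maximal
    ⟨∅, Set.empty_subset _, .empty⟩
  have hcover : R.IsCover Set.univ N := .of_maximal_isSeparated hN
  lift N to Finset α using N.toFinite
  refine ⟨N, hN.prop.2, ?_⟩
  have hunion : Set.univ ⊆ ⋃ c ∈ N, {x | (c, x) ∈ R} := fun x hx ↦ by
    obtain ⟨c, hc, hxc⟩ := hcover hx
    exact Set.mem_biUnion hc (R.symm hxc)
  calc
    Nat.card α = (Set.univ : Set α).ncard := (Set.ncard_univ α).symm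
    _ ≤ (⋃ c ∈ N, {x | (c, x) ∈ R}).ncard := Set.ncard_le_ncard hunion
    _ ≤ ∑ c ∈ N, {x | (c, x) ∈ R}.ncard := N.set_ncard_biUnion_le _
    _ ≤ N.card * b := N.sum_le_card_nsmul _ _ fun c _ ↦ hb c

end GilbertVarshamov

section Lists

variable {α : Type*}

theorem exists_sublist_length_add_length_le {s t l : List α} (hs : s.Sublist l)
    (ht : t.Sublist l) :
    ∃ r : List α, r.Sublist s ∧ r.Sublist t ∧ s.length + t.length ≤ r.length + l.length := by
  induction l generalizing s t with
  | nil => exact ⟨[], by simp_all⟩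
  | cons a l ih =>
    cases hs with
    | cons _ hs =>
      cases ht with
      | cons _ ht =>
        obtain ⟨r, hrs, hrt, hr⟩ := ih hs ht
        exact ⟨r, hrs, hrt, by grind⟩
      | cons_cons _ ht =>
        obtain ⟨r, hrs, hrt, hr⟩ := ih hs ht
        exact ⟨r, hrs, hrt.cons a, by grind⟩
    | cons_cons _ hs =>
      cases ht with
      | cons _ ht =>
        obtain ⟨r, hrs, hrt, hr⟩ := ih hs ht
        exact ⟨r, hrs.cons a, hrt, by grind⟩
      | cons_cons _ ht =>
        obtain ⟨r, hrs, hrt, hr⟩ := ih hs ht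
        exact ⟨a :: r, hrs.cons_cons a, hrt.cons_cons a, by grind⟩

theorem exists_perm_map_eq {s t : List α} (hs : s.Nodup) (ht : t.Nodup)
    (hst : s.length = t.length) : ∃ τ : Equiv.Perm α, s.map τ = t := by
  have := Equiv.Perm.isMultiplyPretransitive α s.length
  obtain ⟨τ, hτ⟩ := MulAction.exists_smul_eq (Equiv.Perm α)
    (⟨s.get, hs.injective_get⟩ : Fin s.length ↪ α)
    ⟨t.get ∘ Fin.cast hst, ht.injective_get.comp (Fin.cast_injective hst)⟩
  refine ⟨τ, List.ext_get (by simpa using hst) fun i hi _ ↦ ?_⟩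
  simpa using DFunLike.congr_fun hτ ⟨i, by simpa using hi⟩

theorem existsUnique_perm_sublist {s l : List α} (hs : s.Nodup) (hl : l.Nodup) (hsl : s ⊆ l) :
    ∃! t : List α, t.Perm s ∧ t.Sublist l := by
  obtain ⟨t, hts, htl⟩ := List.subperm_of_subset hs hsl
  exact ⟨t, ⟨hts, htl⟩, fun t' ⟨hts', htl'⟩ ↦
    (hl.perm_iff_eq_of_sublist htl' htl).1 (hts'.trans hts.symm)⟩

end Lists

section Translocations

variable {α : Type*} {l l' : List α}

theorem IsMove.cons (a : α) (h : IsMove l l') : IsMove (a :: l) (a :: l') := by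
  obtain ⟨i, j, rfl⟩ := h
  exact ⟨i.succ, j.succ, by simp⟩

theorem IsMove.length_eq (h : IsMove l l') : l'.length = l.length := by
  obtain ⟨i, j, rfl⟩ := h
  have hlen : (l.eraseIdx i).length + 1 = l.length := l.length_eraseIdx_add_one i.isLt
  rw [List.length_insertIdx_of_le_length (by omega), hlen]

theorem IsMove.exists_common_sublist (h : IsMove l l') :
    ∃ s : List α, s.Sublist l ∧ s.Sublist l' ∧ s.length + 1 = l.length := by
  obtain ⟨i, j, rfl⟩ := h
  exact ⟨l.eraseIdx i, l.eraseIdx_sublist i, List.sublist_insertIdx _ _ _,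
    l.length_eraseIdx_add_one i.isLt⟩

theorem isMove_swap (a b : α) (l : List α) : IsMove (a :: b :: l) (b :: a :: l) :=
  ⟨⟨0, by simp⟩, ⟨1, by simp⟩, by simp⟩

theorem reflTransGen_isMove_of_perm (h : l.Perm l') : Relation.ReflTransGen IsMove l l' := by
  induction h with
  | nil => exact .refl
  | cons a _ ih => exact ih.lift (a :: ·) fun _ _ h ↦ h.cons a
  | swap a b l => exact .single (isMove_swap b a l)
  | trans _ _ ih₁ ih₂ => exact ih₁.trans ih₂

theorem exists_reachIn_of_reflTransGen {step : List α → List α → Prop}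
    (h : Relation.ReflTransGen step l l') : ∃ m, ReachIn step m l l' := by
  induction h using Relation.ReflTransGen.head_induction_on with
  | refl => exact ⟨0, rfl⟩
  | head hstep _ ih =>
    obtain ⟨m, hm⟩ := ih
    exact ⟨m + 1, _, hstep, hm⟩

theorem ReachIn.exists_common_sublist {m : ℕ} (h : ReachIn IsMove m l l') :
    ∃ s : List α, s.Sublist l ∧ s.Sublist l' ∧ l.length ≤ s.length + m := by
  induction m generalizing l with
  | zero =>
    obtain rfl : l = l' := h
    exact ⟨l, .refl l, .refl l, le_rfl⟩
  | succ m ih =>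
    obtain ⟨l₁, hmove, hreach⟩ := h
    obtain ⟨s, hsl, hsl₁, hs⟩ := hmove.exists_common_sublist
    obtain ⟨t, htl₁, htl', ht⟩ := ih hreach
    obtain ⟨r, hrs, hrt, hr⟩ := exists_sublist_length_add_length_le hsl₁ htl₁
    have hlen : l₁.length = l.length := hmove.length_eq
    exact ⟨r, hrs.trans hsl, hrt.trans htl', by omega⟩

end Translocations

section Permutations

variable {n : ℕ}

theorem length_oneLine (σ : Equiv.Perm (Fin n)) : (oneLine σ).length = n :=
  List.length_ofFn

theorem nodup_oneLine (σ : Equiv.Perm (Fin n)) : (oneLine σ).Nodup :=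
  List.nodup_ofFn.2 σ.injective

theorem mem_oneLine (σ : Equiv.Perm (Fin n)) (a : Fin n) : a ∈ oneLine σ :=
  List.mem_ofFn.2 (σ.surjective a)

theorem oneLine_mul (τ σ : Equiv.Perm (Fin n)) : oneLine (τ * σ) = (oneLine σ).map τ := by
  simp only [oneLine, Equiv.Perm.coe_mul, List.map_ofFn]

theorem oneLine_perm (σ π : Equiv.Perm (Fin n)) : (oneLine σ).Perm (oneLine π) :=
  (List.perm_ext_iff_of_nodup (nodup_oneLine σ) (nodup_oneLine π)).2 fun a ↦
    iff_of_true (mem_oneLine σ a) (mem_oneLine π a)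

theorem reachIn_translocDist (σ π : Equiv.Perm (Fin n)) :
    ReachIn IsMove (translocDist σ π) (oneLine σ) (oneLine π) :=
  Nat.sInf_mem <| exists_reachIn_of_reflTransGen <| reflTransGen_isMove_of_perm <| oneLine_perm σ π

theorem exists_common_sublist_le_add_translocDist (σ π : Equiv.Perm (Fin n)) :
    ∃ s : List (Fin n), s.Sublist (oneLine σ) ∧ s.Sublist (oneLine π) ∧
      n ≤ s.length + translocDist σ π := by
  simpa only [length_oneLine] using (reachIn_translocDist σ π).exists_common_sublist

theorem card_filter_map_sublist_oneLine (τ : Equiv.Perm (Fin n)) (s : List (Fin n)) :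
    (Finset.univ.filter fun π ↦ (s.map τ).Sublist (oneLine π)).card =
      (Finset.univ.filter fun π ↦ s.Sublist (oneLine π)).card := by
  refine (Finset.card_equiv (Equiv.mulLeft τ) fun π ↦ ?_).symm
  simp only [Finset.mem_filter, Finset.mem_univ, true_and, Equiv.coe_mulLeft, oneLine_mul]
  simp [List.sublist_map_iff, List.map_inj_right τ.injective]

theorem card_filter_sublist_oneLine {s : List (Fin n)} (hs : s.Nodup) :
    s.length.factorial * (Finset.univ.filter fun π ↦ s.Sublist (oneLine π)).card =
      n.factorial := by
  have hcount : ∀ t ∈ s.permutations.toFinset,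
      (Finset.univ.filter fun π ↦ t.Sublist (oneLine π)).card =
        (Finset.univ.filter fun π ↦ s.Sublist (oneLine π)).card := by
    intro t ht
    have hts : t.Perm s := List.mem_permutations.1 (List.mem_toFinset.1 ht)
    obtain ⟨τ, rfl⟩ := exists_perm_map_eq hs (hts.nodup_iff.2 hs) hts.length_eq.symm
    exact card_filter_map_sublist_oneLine τ s
  have hunique : ∀ π ∈ (Finset.univ : Finset (Equiv.Perm (Fin n))),
      (s.permutations.toFinset.filter fun t ↦ t.Sublist (oneLine π)).card = 1 := by
    intro π _
    rw [Finset.card_eq_one, Finset.singleton_iff_unique_mem]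
    simpa only [Finset.mem_filter, List.mem_toFinset, List.mem_permutations] using
      existsUnique_perm_sublist hs (nodup_oneLine π) fun a _ ↦ mem_oneLine π a
  simpa [List.toFinset_card_of_nodup (List.nodup_permutations s hs), List.length_permutations,
    Fintype.card_perm] using Finset.card_mul_eq_card_mul _ hcount hunique

/-- The pairs of permutations whose one-line notations have a common subsequence of length `k`.
For `k = n - d + 1` it contains all pairs at translocation distance less than `d`, so that separated
sets for this relation are translocation codes. -/
def commonSublistRel (n k : ℕ) : SetRel (Equiv.Perm (Fin n)) (Equiv.Perm (Fin n)) :=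
  {p | ∃ s : List (Fin n), s.length = k ∧ s.Sublist (oneLine p.1) ∧ s.Sublist (oneLine p.2)}

instance isSymm_commonSublistRel (n k : ℕ) : (commonSublistRel n k).IsSymm where
  symm _ _ := fun ⟨s, hk, hσ, hπ⟩ ↦ ⟨s, hk, hπ, hσ⟩

variable {k : ℕ}

theorem isRefl_commonSublistRel (hk : k ≤ n) : (commonSublistRel n k).IsRefl where
  refl σ := ⟨(oneLine σ).take k, by simp [length_oneLine, hk], List.take_sublist _ _,
    List.take_sublist _ _⟩

theorem lt_add_translocDist_of_notMem_commonSublistRel {σ π : Equiv.Perm (Fin n)}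
    (h : (σ, π) ∉ commonSublistRel n k) : n < k + translocDist σ π := by
  obtain ⟨s, hσ, hπ, hs⟩ := exists_common_sublist_le_add_translocDist σ π
  contrapose! h
  have htake : (s.take k).Sublist s := List.take_sublist k s
  exact ⟨s.take k, List.length_take_of_le (by omega), htake.trans hσ, htake.trans hπ⟩

theorem ncard_commonSublistRel_le (σ : Equiv.Perm (Fin n)) :
    {π | (σ, π) ∈ commonSublistRel n k}.ncard ≤ n.choose k * (n.factorial / k.factorial) := by
  let S : Finset (List (Fin n)) := ((oneLine σ).sublistsLen k).toFinset
  have hunion : {π | (σ, π) ∈ commonSublistRel n k} ⊆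
      S.biUnion fun s ↦ Finset.univ.filter fun π ↦ s.Sublist (oneLine π) := by
    rintro π ⟨s, hk, hσ, hπ⟩
    simpa [S] using ⟨s, ⟨hσ, hk⟩, hπ⟩
  have hcount : ∀ s ∈ S, (Finset.univ.filter fun π ↦ s.Sublist (oneLine π)).card ≤
      n.factorial / k.factorial := by
    intro s hs
    obtain ⟨hσ, rfl⟩ := List.mem_sublistsLen.1 (List.mem_toFinset.1 hs)
    exact (Nat.eq_div_of_mul_eq_right (Nat.factorial_ne_zero _)
      (card_filter_sublist_oneLine (hσ.nodup (nodup_oneLine σ)))).le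
  have hS : S.card ≤ n.choose k := by
    simpa [length_oneLine] using ((oneLine σ).sublistsLen k).toFinset_card_le
  calc
    _ ≤ (S.biUnion fun s ↦ Finset.univ.filter fun π ↦ s.Sublist (oneLine π)).card := by
      simpa only [Set.ncard_coe_finset] using Set.ncard_le_ncard hunion
    _ ≤ S.card * (n.factorial / k.factorial) := Finset.card_biUnion_le_card_mul _ _ _ hcount
    _ ≤ n.choose k * (n.factorial / k.factorial) := Nat.mul_le_mul_right _ hS

theorem exists_isSeparated_commonSublistRel (hk : k ≤ n) :
    ∃ C : Finset (Equiv.Perm (Fin n)), (commonSublistRel n k).IsSeparated (C : Set _) ∧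
      k.factorial ≤ C.card * n.choose k := by
  have := isRefl_commonSublistRel hk
  obtain ⟨C, hC, hcard⟩ := exists_isSeparated_card_le_mul (commonSublistRel n k)
    ncard_commonSublistRel_le
  refine ⟨C, hC, ?_⟩
  have hdvd : k.factorial ∣ n.factorial := Nat.factorial_dvd_factorial hk
  refine Nat.le_of_mul_le_mul_right ?_ (Nat.div_pos (Nat.factorial_le hk) k.factorial_pos)
  calc
    k.factorial * (n.factorial / k.factorial) = Nat.card (Equiv.Perm (Fin n)) := by
      rw [Nat.mul_div_cancel' hdvd, Nat.card_perm, Nat.card_fin]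
    _ ≤ C.card * n.choose k * (n.factorial / k.factorial) := by rwa [mul_assoc]

theorem card_le_maxTranslocCode {d : ℕ} {C : Finset (Equiv.Perm (Fin n))}
    (hC : ∀ σ ∈ C, ∀ π ∈ C, σ ≠ π → d ≤ translocDist σ π) : C.card ≤ maxTranslocCode n d :=
  le_csSup ⟨Fintype.card (Equiv.Perm (Fin n)), by rintro _ ⟨D, rfl, _⟩; exact D.card_le_univ⟩
    ⟨C, rfl, hC⟩

end Permutations

/-- Gilbert–Varshamov-type bound: for all `n ≥ d ≥ 1`,
`A∘(n,d) ≥ (n−d+1)! / C(n,d−1)`. -/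
theorem maxTranslocCode_lower_bound (n d : ℕ) (hd : 1 ≤ d) (hdn : d ≤ n) :
    ((n - d + 1).factorial : ℝ) / (n.choose (d - 1) : ℝ) ≤ (maxTranslocCode n d : ℝ) := by
  obtain ⟨C, hsep, hcard⟩ := exists_isSeparated_commonSublistRel (show n - d + 1 ≤ n by omega)
  have hC : C.card ≤ maxTranslocCode n d := card_le_maxTranslocCode fun σ hσ π hπ hne ↦ by
    have := lt_add_translocDist_of_notMem_commonSublistRel (hsep hσ hπ hne)
    omega
  have hchoose : n.choose (n - d + 1) = n.choose (d - 1) :=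
    Nat.choose_symm_of_eq_add (by omega)
  rw [hchoose] at hcard
  refine div_le_of_le_mul₀ (Nat.cast_nonneg _) (Nat.cast_nonneg _) ?_
  exact_mod_cast hcard.trans (Nat.mul_le_mul_right _ hC)
end

section
/- For all integers n and d with n ≥ d ≥ 1, the maximum size A∘(n,d) of a subset of S_n whose distinct elements are at pairwise translocation distance at least d satisfies A∘(n,d) ≤ (n−d+1)!. -/
/-!
Placing a single letter correctly costs one translocation. Hence two words with the same letters
and a common subsequence of length `k` are at distance at most `n - k`. If `T` is a set of
`n - d + 1` letters, two codewords inducing the same order on `T` share a subsequence of length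
`n - d + 1`, so their distance is at most `d - 1`; distinct codewords therefore order `T`
differently, which leaves only `(n - d + 1)!` possibilities.
-/

section List

open List

variable {α : Type*}

theorem insertIdx_length_append (u v : List α) (x : α) :
    (u ++ v).insertIdx u.length x = u ++ x :: v := by
  induction u with
  | nil => rfl
  | cons y u ih => simp only [cons_append, length_cons, insertIdx_succ_cons, ih]

theorem exists_eq_append_cons_of_sublist_of_count_lt [DecidableEq α] {s l : List α} {x : α}
    (hs : s <+ l) (hx : s.count x < l.count x) :
    ∃ a b, l = a ++ x :: b ∧ s <+ a ++ b := by
  induction hs with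
  | slnil => exact absurd hx (lt_irrefl _)
  | @cons s l y hs ih =>
    obtain rfl | hyx := eq_or_ne y x
    · exact ⟨[], l, rfl, hs⟩
    · rw [count_cons_of_ne hyx] at hx
      obtain ⟨a, b, rfl, hab⟩ := ih hx
      exact ⟨y :: a, b, rfl, hab.cons y⟩
  | @cons_cons s l y hs ih =>
    rw [count_cons, count_cons, Nat.add_lt_add_iff_right] at hx
    obtain ⟨a, b, rfl, hab⟩ := ih hx
    exact ⟨y :: a, b, rfl, hab.cons_cons y⟩

theorem isMove_of_append_eq_append {a b u v : List α} (h : a ++ b = u ++ v) (x : α) :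
    IsMove (a ++ x :: b) (u ++ x :: v) := by
  have hu : u.length < (a ++ x :: b).length := by
    have := congrArg length h
    simp only [length_append, length_cons] at this ⊢
    omega
  refine ⟨⟨a.length, by simp⟩, ⟨u.length, hu⟩, ?_⟩
  have herase : (a ++ x :: b).eraseIdx a.length = u ++ v := by
    simp [eraseIdx_append_of_length_le, h]
  simp only [herase, insertIdx_length_append, get_eq_getElem,
    getElem_append_right le_rfl, Nat.sub_self, getElem_cons_zero]

-- A letter of `l'` outside the chosen copy of `s` is moved within `l` to its place relative to `s`.
theorem exists_isMove_of_common_sublist {s l l' : List α} (hl : l ~ l') (hs : s <+ l)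
    (hs' : s <+ l') (hlt : s.length < l.length) :
    ∃ t k, t.length = s.length + 1 ∧ IsMove l k ∧ k ~ l ∧ t <+ k ∧ t <+ l' := by
  classical
  obtain ⟨x, hx⟩ := hs.subperm.exists_of_length_lt hlt
  have hcount : s.count x < l.count x := by
    simpa only [count_cons_self, Nat.succ_le_iff] using hx.count_le x
  obtain ⟨a, b, rfl, hab⟩ := exists_eq_append_cons_of_sublist_of_count_lt hs hcount
  obtain ⟨c, d, rfl, hcd⟩ :=
    exists_eq_append_cons_of_sublist_of_count_lt hs' (hl.count_eq x ▸ hcount)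
  obtain ⟨s₁, s₂, rfl, hc, hd⟩ := sublist_append_iff.1 hcd
  obtain ⟨u, v, huv, hu, hv⟩ := append_sublist_iff.1 hab
  have hperm : u ++ x :: v ~ a ++ x :: b :=
    perm_middle.trans (huv ▸ perm_middle.symm)
  exact ⟨s₁ ++ x :: s₂, u ++ x :: v, by simp only [length_append, length_cons, Nat.add_assoc],
    isMove_of_append_eq_append huv x, hperm, hu.append (hv.cons_cons x), hc.append (hd.cons_cons x)⟩

theorem reachIn_isMove_of_common_sublist {s l l' : List α} {m : ℕ} (hl : l ~ l') (hs : s <+ l)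
    (hs' : s <+ l') (hlen : s.length + m = l.length) : ReachIn IsMove m l l' := by
  induction m generalizing s l with
  | zero => exact (hs.eq_of_length hlen).symm.trans (hs'.eq_of_length (hlen.trans hl.length_eq))
  | succ m ih =>
    obtain ⟨t, k, ht, hmove, hkl, htk, htl'⟩ :=
      exists_isMove_of_common_sublist hl hs hs' (by omega)
    exact ⟨k, hmove, ih (hkl.trans hl) htk htl' (by have := hkl.length_eq; omega)⟩

end List

section Perm

open List

variable {n : ℕ}

theorem oneLine_perm_finRange (σ : Equiv.Perm (Fin n)) : oneLine σ ~ finRange n := by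
  rw [oneLine, ofFn_eq_map]
  exact σ.map_finRange_perm

theorem filter_mem_oneLine_perm_toList (T : Finset (Fin n)) (σ : Equiv.Perm (Fin n)) :
    (oneLine σ).filter (· ∈ T) ~ T.toList := by
  refine ((oneLine_perm_finRange σ).filter _).trans ?_
  rw [perm_ext_iff_of_nodup ((nodup_finRange n).filter _) T.nodup_toList]
  simp

theorem translocDist_le_of_common_sublist {σ π : Equiv.Perm (Fin n)} {s : List (Fin n)}
    (hσ : s <+ oneLine σ) (hπ : s <+ oneLine π) : translocDist σ π ≤ n - s.length := by
  have hlength : (oneLine σ).length = n := length_ofFn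
  refine Nat.sInf_le (reachIn_isMove_of_common_sublist
    ((oneLine_perm_finRange σ).trans (oneLine_perm_finRange π).symm) hσ hπ ?_)
  have := hσ.length_le
  omega

theorem translocDist_le_of_filter_mem_eq {σ π : Equiv.Perm (Fin n)} {T : Finset (Fin n)}
    (h : (oneLine σ).filter (· ∈ T) = (oneLine π).filter (· ∈ T)) :
    translocDist σ π ≤ n - T.card := by
  have hlength := (filter_mem_oneLine_perm_toList T σ).length_eq
  rw [Finset.length_toList] at hlength
  rw [← hlength]
  exact translocDist_le_of_common_sublist filter_sublist (h ▸ filter_sublist)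

theorem card_le_factorial_of_lt_translocDist (T : Finset (Fin n))
    {C : Finset (Equiv.Perm (Fin n))}
    (hC : ∀ σ ∈ C, ∀ π ∈ C, σ ≠ π → n - T.card < translocDist σ π) :
    C.card ≤ T.card.factorial := by
  have hmaps : ∀ σ ∈ C, (oneLine σ).filter (· ∈ T) ∈ T.toList.permutations.toFinset :=
    fun σ _ => mem_toFinset.2 (mem_permutations.2 (filter_mem_oneLine_perm_toList T σ))
  have hinj : Set.InjOn (fun σ => (oneLine σ).filter (· ∈ T)) C := fun σ hσ π hπ h =>
    not_ne_iff.1 fun hne => (hC σ hσ π hπ hne).not_ge (translocDist_le_of_filter_mem_eq h)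
  calc C.card ≤ T.toList.permutations.toFinset.card := Finset.card_le_card_of_injOn _ hmaps hinj
    _ ≤ T.toList.permutations.length := toFinset_card_le _
    _ = T.card.factorial := by rw [length_permutations, Finset.length_toList]

end Perm

/-- Singleton-type bound: for all `n ≥ d ≥ 1`, `A∘(n,d) ≤ (n−d+1)!`. -/
theorem maxTranslocCode_upper_bound (n d : ℕ) (hd : 1 ≤ d) (hdn : d ≤ n) :
    maxTranslocCode n d ≤ (n - d + 1).factorial := by
  obtain ⟨T, -, hT⟩ : ∃ T ⊆ (Finset.univ : Finset (Fin n)), T.card = n - d + 1 :=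
    Finset.exists_subset_card_eq (by rw [Finset.card_fin]; omega)
  apply csSup_le'
  rintro _ ⟨C, rfl, hC⟩
  rw [← hT]
  refine card_le_factorial_of_lt_translocDist T fun σ hσ π hπ hne => ?_
  have hdist := hC σ hσ π hπ hne
  omega
end
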